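/- arXiv:1108.3267 — 2 statements merged into one kernel-verified Lean document; each statement's English description precedes it below -/
import Mathlib

section
/- Let (Ω, Σ, μ) be a σ-finite measure space, Φ an N-function satisfying the (δ₂,Δ₂)-condition, and w : Ω → (0,∞) measurable. Let m_w = {f essentially bounded measurable : ∫ Φ(w·|f|) dμ < ∞} with norm ‖f‖_{Φ,w} = inf{λ > 0 : ∫ Φ(w·|f|/λ) dμ ≤ 1}, and let L_Φ(μ) = {g measurable : ∫ Φ(|g|) dμ < ∞} with Luxemburg norm ‖g‖_Φ = inf{λ > 0 : ∫ Φ(|g|/λ) dμ ≤ 1}. Then the map U(f) = w·f is a linear injection from m_w into L_Φ(μ) satisfying ‖U(f)‖_Φ = ‖f‖_{Φ,w} for all f ∈ m_w, and the range U(m_w) is dense in L_Φ(μ); consequently the completion of (m_w, ‖·‖_{Φ,w}) is isometrically isomorphic to L_Φ(μ). -/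
open MeasureTheory Filter Set Topology

/-!
Since `|w f| = w |f|`, the two norm integrands agree pointwise; this gives the isometry, while
`w > 0` gives injectivity. The content is density. Given `g` with `∫ Φ(|g|) < ∞`, truncate:
`f_n = g / w` where `|g| ≤ n w` and `f_n = 0` elsewhere. Then `f_n` is bounded by `n` and
`g - w f_n` is `g` restricted to `{n w < |g|}`. The Δ₂-condition makes `Φ(|g| / l)` integrable for
every `l > 0`, and the sets `{n w < |g|}` shrink to the empty set because `w > 0`, so by dominated
convergence the modular of `(g - w f_n) / l` tends to `0`; once it is at most `1` the Luxemburg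
norm of `g - w f_n` is at most `l`.
-/

/-- An N-function is monotone on `[0,∞)`, hence a measurable function of `|·|`; nothing is assumed
about its values on the negative half-line. -/
lemma nFunction_abs_measurable (p Φ : ℝ → ℝ)
    (hp_mono : MonotoneOn p (Ici (0 : ℝ))) (hp_zero : p 0 = 0)
    (hΦ : ∀ t : ℝ, 0 ≤ t → Φ t = ∫ s in (0 : ℝ)..t, p s) :
    Measurable fun x : ℝ => Φ |x| := by
  have hint : ∀ a b : ℝ, 0 ≤ a → 0 ≤ b → IntervalIntegrable p volume a b := fun a b ha hb =>
    (hp_mono.mono fun x hx => (le_min ha hb).trans hx.1).intervalIntegrable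
  have hmono : Monotone fun x : ℝ => Φ (max x 0) := by
    intro a b hab
    have ha : 0 ≤ max a 0 := le_max_right _ _
    have hb : 0 ≤ max b 0 := le_max_right _ _
    have hab' : max a 0 ≤ max b 0 := max_le_max_right 0 hab
    change Φ (max a 0) ≤ Φ (max b 0)
    rw [hΦ _ ha, hΦ _ hb,
      ← intervalIntegral.integral_add_adjacent_intervals (hint 0 _ le_rfl ha) (hint _ _ ha hb)]
    have h0 : 0 ≤ ∫ s in (max a 0)..(max b 0), p s := by
      refine intervalIntegral.integral_nonneg hab' fun u hu => ?_
      have hu0 : 0 ≤ u := ha.trans hu.1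
      rw [← hp_zero]
      exact hp_mono (mem_Ici.2 le_rfl) hu0 hu0
    linarith
  have h := hmono.measurable.comp (measurable_norm (α := ℝ))
  have heq : (fun x : ℝ => Φ |x|) = (fun x : ℝ => Φ (max x 0)) ∘ norm := by
    funext x
    simp
  rw [heq]
  exact h

/-- **The weighted Orlicz space is isometric to the Orlicz space (Theorem 4,
commutative form).**  Let `μ` be σ-finite, `Φ` an N-function with the
`(δ₂,Δ₂)`-condition and `w : Ω → (0,∞)` measurable.  With
`m_w = {f essentially bounded measurable : ∫ Φ(w·|f|) dμ < ∞}`, its norm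
`‖f‖_{Φ,w}`, and the Luxemburg norm `‖·‖_Φ` on
`L_Φ(μ) = {g : ∫ Φ(|g|) dμ < ∞}`, the map `U f = w·f` is a linear injection
(modulo a.e. equality) of `m_w` into `L_Φ(μ)` with `‖U f‖_Φ = ‖f‖_{Φ,w}`,
and its range is dense in `L_Φ(μ)`. -/
theorem weighted_orlicz_isometric_to_orlicz
    {Ω : Type*} [MeasurableSpace Ω] (μ : Measure Ω) [SigmaFinite μ]
    (p Φ : ℝ → ℝ)
    (hp_mono : MonotoneOn p (Ici (0 : ℝ)))
    (hp_rc : ∀ s : ℝ, 0 ≤ s → ContinuousWithinAt p (Ici s) s)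
    (hp_zero : p 0 = 0)
    (hp_pos : ∀ s : ℝ, 0 < s → 0 < p s)
    (hp_top : Tendsto p atTop atTop)
    (hΦ : ∀ t : ℝ, 0 ≤ t → Φ t = ∫ s in (0 : ℝ)..t, p s)
    (hΔ₂ : ∀ k : ℝ, 0 < k → ∃ r : ℝ, 0 < r ∧ ∀ t : ℝ, 0 ≤ t → Φ (k * t) ≤ r * Φ t)
    (w : Ω → ℝ) (hw_meas : Measurable w) (hw_pos : ∀ ω, 0 < w ω)
    (m : Set (Ω → ℝ))
    (hm : m = {f : Ω → ℝ | Measurable f ∧ (∃ M : ℝ, ∀ᵐ ω ∂μ, |f ω| ≤ M) ∧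
      ∫⁻ ω, ENNReal.ofReal (Φ (w ω * |f ω|)) ∂μ < ⊤})
    (nrmw nrmΦ : (Ω → ℝ) → ℝ)
    (hnrmw : ∀ f : Ω → ℝ, nrmw f = sInf {l : ℝ | 0 < l ∧
      ∫⁻ ω, ENNReal.ofReal (Φ (w ω * |f ω| / l)) ∂μ ≤ 1})
    (hnrmΦ : ∀ g : Ω → ℝ, nrmΦ g = sInf {l : ℝ | 0 < l ∧
      ∫⁻ ω, ENNReal.ofReal (Φ (|g ω| / l)) ∂μ ≤ 1}) :
    -- `U f = w • f` maps `m` into `L_Φ(μ)`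
    (∀ f ∈ m, Measurable (w * f) ∧
      ∫⁻ ω, ENNReal.ofReal (Φ |(w * f) ω|) ∂μ < ⊤) ∧
    -- `U` is linear
    (∀ f g : Ω → ℝ, w * (f + g) = w * f + w * g) ∧
    (∀ (c : ℝ) (f : Ω → ℝ), w * (c • f) = c • (w * f)) ∧
    -- `U` is injective modulo a.e. equality
    (∀ f ∈ m, ∀ g ∈ m, w * f =ᵐ[μ] w * g → f =ᵐ[μ] g) ∧
    -- `U` is isometric
    (∀ f ∈ m, nrmΦ (w * f) = nrmw f) ∧
    -- the range of `U` is dense in `L_Φ(μ)`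
    (∀ g : Ω → ℝ, Measurable g → ∫⁻ ω, ENNReal.ofReal (Φ |g ω|) ∂μ < ⊤ →
      ∀ ε : ℝ, 0 < ε → ∃ f ∈ m, nrmΦ (g - w * f) < ε) := by
  have hΦ0 : Φ 0 = 0 := by simp [hΦ 0 le_rfl]
  have hwabs : ∀ (f : Ω → ℝ) ω, |(w * f) ω| = w ω * |f ω| := fun f ω => by
    rw [Pi.mul_apply, abs_mul, abs_of_pos (hw_pos ω)]
  refine ⟨?_, fun f g => mul_add w f g, fun c f => mul_smul_comm c w f, ?_, ?_, ?_⟩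
  · intro f hf
    rw [hm] at hf
    refine ⟨hw_meas.mul hf.1, ?_⟩
    simp only [hwabs]
    exact hf.2.2
  · intro f _ g _ h
    filter_upwards [h] with ω hω
    exact mul_left_cancel₀ (hw_pos ω).ne' hω
  · intro f _
    simp only [hnrmw, hnrmΦ, hwabs]
  · intro g hg hgΦ ε hε
    have hl : 0 < ε / 2 := by positivity
    let A : ℕ → Set Ω := fun n => {ω | n * w ω < |g ω|}
    have hA : ∀ n, MeasurableSet (A n) := fun n =>
      measurableSet_lt (hw_meas.const_mul _) hg.abs
    let G : Ω → ENNReal := fun ω => ENNReal.ofReal (Φ (|g ω| / (ε / 2)))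
    have hG : Measurable G := by
      have h := (nFunction_abs_measurable p Φ hp_mono hp_zero hΦ).comp (hg.div_const (ε / 2))
      refine Measurable.ennreal_ofReal ?_
      convert h using 2 with ω
      simp [abs_div, abs_of_pos hε]
    have hGfin : ∫⁻ ω, G ω ∂μ ≠ ⊤ := by
      obtain ⟨r, hr, hrΦ⟩ := hΔ₂ (ε / 2)⁻¹ (inv_pos.2 hl)
      refine ne_top_of_le_ne_top (ENNReal.mul_ne_top (ENNReal.ofReal_ne_top (r := r)) hgΦ.ne) ?_
      rw [← lintegral_const_mul' _ _ ENNReal.ofReal_ne_top]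
      refine lintegral_mono fun ω => ?_
      rw [← ENNReal.ofReal_mul hr.le]
      refine ENNReal.ofReal_le_ofReal ?_
      rw [div_eq_inv_mul]
      exact hrΦ _ (abs_nonneg _)
    have hlim : Tendsto (fun n => ∫⁻ ω, (A n).indicator G ω ∂μ) atTop (𝓝 0) := by
      have h := tendsto_lintegral_of_dominated_convergence (μ := μ)
        (F := fun n => (A n).indicator G) (f := fun _ => 0) G (fun n => hG.indicator (hA n))
        (fun n => ae_of_all _ fun ω => indicator_le_self' (fun _ _ => zero_le) ω) hGfin
        (ae_of_all _ fun ω => ?_)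
      · simpa using h
      · -- Once `n` exceeds `|g ω| / w ω`, the point `ω` has left `A n`.
        obtain ⟨N, hN⟩ := exists_nat_ge (|g ω| / w ω)
        refine tendsto_const_nhds.congr' ?_
        filter_upwards [eventually_ge_atTop N] with n hn
        have hnω : ω ∉ A n := by
          have h1 : |g ω| / w ω ≤ n := hN.trans (by exact_mod_cast hn)
          exact not_lt.2 ((div_le_iff₀ (hw_pos ω)).1 h1)
        exact (indicator_of_notMem hnω _).symm
    obtain ⟨n, hn⟩ := (hlim.eventually (ge_mem_nhds zero_lt_one)).exists
    have hin : ∀ ω, ω ∈ A n → (A n)ᶜ.indicator (g / w) ω = 0 := fun ω h =>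
      indicator_of_notMem (s := (A n)ᶜ) (not_not.2 h) _
    have hout : ∀ ω, ω ∉ A n → (A n)ᶜ.indicator (g / w) ω = g ω / w ω := fun ω h =>
      indicator_of_mem (s := (A n)ᶜ) h _
    refine ⟨(A n)ᶜ.indicator (g / w), ?_, ?_⟩
    · rw [hm]
      refine ⟨(hg.div hw_meas).indicator (hA n).compl, ⟨n, ae_of_all _ fun ω => ?_⟩,
        lt_of_le_of_lt (lintegral_mono fun ω => ?_) hgΦ⟩
      · by_cases h : ω ∈ A n
        · simp [hin ω h]
        · rw [hout ω h, abs_div, abs_of_pos (hw_pos ω), div_le_iff₀ (hw_pos ω)]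
          exact not_lt.1 h
      · by_cases h : ω ∈ A n
        · simp [hin ω h, hΦ0]
        · rw [hout ω h, abs_div, abs_of_pos (hw_pos ω), mul_div_cancel₀ _ (hw_pos ω).ne']
    · rw [hnrmΦ]
      refine lt_of_le_of_lt (csInf_le ⟨0, fun l h => h.1.le⟩ ⟨hl, ?_⟩) (half_lt_self hε)
      refine le_trans (lintegral_mono fun ω => ?_) hn
      by_cases h : ω ∈ A n
      · simp [h, G]
      · simp [h, mul_div_cancel₀ _ (hw_pos ω).ne', hΦ0]
end

section
/- Let β > 1, Φ_β(t) = t^β(ln t + 1) for t ≥ 1, w_i = (i² · e^{2βi²} · (2i²+1))⁻¹ and h_i = e^{βi²}(i²+1) for integers i ≥ 2. For a finitely supported function x : ℕ → [0,∞) with x_i ∈ {0} ∪ [1,∞) for all i and support contained in {2,3,…}, define the two modulars ρ₁(x) = Σ_{i ∈ supp x} Φ_β(e^{i²}·x_i)·w_i and ρ₂(x) = Σ_{i ∈ supp x} h_i·Φ_β(x_i)·w_i. Then for every C > 0 there exists such a finitely supported x (namely x_i = e^{i²} for 2 ≤ i ≤ n and x_i = 0 otherwise, for n large enough) with ρ₁(x)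 < 1 and ρ₂(x) > C. In particular there is no constant C > 0 with ρ₂(x) ≤ C whenever ρ₁(x) ≤ 1. -/
/-!
The witness is the truncation `x i = e^{i²}` for `2 ≤ i < n + 2`, and `x i = 0` elsewhere.
For it the exponentials cancel against the weights: the `i`-th term of `ρ₁ x` is exactly `1 / i²`,
and the `i`-th term of `ρ₂ x` is `(i² + 1)² / (i² (2 i² + 1)) ≥ 1 / 2`. Hence `ρ₁ x < 1` for every
`n` by the telescoping bound `sum_inv_sq_le`, while `ρ₂ x ≥ n / 2` is unbounded.
-/

open Real Finset

/-- The telescoping bound `∑ 1 / i² ≤ ∑ (1 / (i - 1) - 1 / i)` over `2 ≤ i ≤ n + 1`. -/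
lemma sum_inv_sq_le (n : ℕ) :
    ∑ i ∈ Finset.Ico 2 (n + 2), ((i : ℝ) ^ 2)⁻¹ ≤ 1 - ((n : ℝ) + 1)⁻¹ := by
  induction n with
  | zero => simp
  | succ k ih =>
    rw [show k + 1 + 2 = (k + 2) + 1 by ring, Finset.sum_Ico_succ_top (by omega)]
    have key : (((k : ℝ) + 2) ^ 2)⁻¹ ≤ ((k : ℝ) + 1)⁻¹ - ((k : ℝ) + 2)⁻¹ := by
      rw [inv_sub_inv (by positivity) (by positivity), inv_eq_one_div,
        div_le_div_iff₀ (by positivity) (by positivity)]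
      nlinarith [(Nat.cast_nonneg k : (0 : ℝ) ≤ k)]
    push_cast
    rw [show (k : ℝ) + 1 + 1 = k + 2 by ring]
    linarith

/-- **The two modulars of the Example are not equivalent on finite sequences.**
For `β > 1`, `Φ_β(t) = t^β(ln t + 1)` (`t ≥ 1`), `w_i = (i²·e^{2βi²}·(2i²+1))⁻¹`,
`h_i = e^{βi²}(i²+1)`, and the modulars `ρ₁(x) = Σ_{i ∈ supp x} Φ_β(e^{i²} x_i) w_i`,
`ρ₂(x) = Σ_{i ∈ supp x} h_i Φ_β(x_i) w_i` on finitely supported `x : ℕ → [0,∞)`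
with values in `{0} ∪ [1,∞)` and support in `{2,3,…}`: for every `C > 0` there
is such an `x` with `ρ₁(x) < 1` and `ρ₂(x) > C`; in particular no constant
`C > 0` satisfies `ρ₂(x) ≤ C` whenever `ρ₁(x) ≤ 1`. -/
theorem example_modulars_not_equivalent
    (β : ℝ) (hβ : 1 < β)
    (Φ : ℝ → ℝ) (hΦ : ∀ t : ℝ, 1 ≤ t → Φ t = t ^ β * (Real.log t + 1))
    (w h : ℕ → ℝ)
    (hw : ∀ i : ℕ, w i = ((i : ℝ) ^ 2 * Real.exp (2 * β * (i : ℝ) ^ 2) *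
      (2 * (i : ℝ) ^ 2 + 1))⁻¹)
    (hh : ∀ i : ℕ, h i = Real.exp (β * (i : ℝ) ^ 2) * ((i : ℝ) ^ 2 + 1))
    (ρ₁ ρ₂ : (ℕ →₀ ℝ) → ℝ)
    (hρ₁ : ∀ x : ℕ →₀ ℝ, ρ₁ x = ∑ i ∈ x.support, Φ (Real.exp ((i : ℝ) ^ 2) * x i) * w i)
    (hρ₂ : ∀ x : ℕ →₀ ℝ, ρ₂ x = ∑ i ∈ x.support, h i * Φ (x i) * w i) :
    (∀ C : ℝ, 0 < C → ∃ x : ℕ →₀ ℝ,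
      (∀ i, x i = 0 ∨ 1 ≤ x i) ∧ (∀ i ∈ x.support, 2 ≤ i) ∧
      ρ₁ x < 1 ∧ C < ρ₂ x) ∧
    ¬ ∃ C : ℝ, 0 < C ∧ ∀ x : ℕ →₀ ℝ,
      (∀ i, x i = 0 ∨ 1 ≤ x i) → (∀ i ∈ x.support, 2 ≤ i) →
      ρ₁ x ≤ 1 → ρ₂ x ≤ C := by
  have main : ∀ C : ℝ, 0 < C → ∃ x : ℕ →₀ ℝ,
      (∀ i, x i = 0 ∨ 1 ≤ x i) ∧ (∀ i ∈ x.support, 2 ≤ i) ∧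
      ρ₁ x < 1 ∧ C < ρ₂ x := by
    intro C hC
    obtain ⟨n, hn⟩ := exists_nat_gt (2 * C)
    have hexp : ∀ i : ℕ, 1 ≤ Real.exp ((i : ℝ) ^ 2) := fun i =>
      Real.one_le_exp (by positivity)
    let x : ℕ →₀ ℝ := Finsupp.onFinset (Finset.Ico 2 (n + 2))
      (fun i => if i ∈ Finset.Ico 2 (n + 2) then Real.exp ((i : ℝ) ^ 2) else 0)
      (fun i hi => by
        by_contra hc
        exact hi (if_neg hc))
    have hx : ∀ i, x i = if i ∈ Finset.Ico 2 (n + 2) then Real.exp ((i : ℝ) ^ 2) else 0 :=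
      fun i => rfl
    have hsupp : x.support = Finset.Ico 2 (n + 2) := by
      ext i
      rw [Finsupp.mem_support_iff, hx]
      split_ifs with hi
      · simpa only [hi, iff_true] using (Real.exp_pos _).ne'
      · simp only [hi, ne_eq, not_true_eq_false]
    refine ⟨x, fun i => ?_, fun i hi => ?_, ?_, ?_⟩
    · rw [hx]
      split_ifs
      · exact Or.inr (hexp i)
      · exact Or.inl rfl
    · rw [hsupp] at hi
      exact (Finset.mem_Ico.mp hi).1
    · have hterm : ∀ i ∈ Finset.Ico 2 (n + 2),
          Φ (Real.exp ((i : ℝ) ^ 2) * x i) * w i = ((i : ℝ) ^ 2)⁻¹ := by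
        intro i hi
        have hi0 : (i : ℝ) ≠ 0 := by
          have := (Finset.mem_Ico.mp hi).1
          exact_mod_cast (by omega : i ≠ 0)
        rw [hx, if_pos hi, hw, hΦ _ (one_le_mul_of_one_le_of_one_le (hexp i) (hexp i)),
          ← Real.exp_add, Real.log_exp, ← Real.exp_mul,
          show ((i : ℝ) ^ 2 + (i : ℝ) ^ 2) * β = 2 * β * (i : ℝ) ^ 2 by ring,
          show (i : ℝ) ^ 2 + (i : ℝ) ^ 2 = 2 * (i : ℝ) ^ 2 by ring]
        have h1 := (Real.exp_pos (2 * β * (i : ℝ) ^ 2)).ne'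
        have h2 : 2 * (i : ℝ) ^ 2 + 1 ≠ 0 := by positivity
        field_simp
      rw [hρ₁, hsupp, Finset.sum_congr rfl hterm]
      have h1 := sum_inv_sq_le n
      have h2 : (0 : ℝ) < ((n : ℝ) + 1)⁻¹ := by positivity
      linarith
    · have hterm : ∀ i ∈ Finset.Ico 2 (n + 2), (1 / 2 : ℝ) ≤ h i * Φ (x i) * w i := by
        intro i hi
        have hi0 : (0 : ℝ) < i := by
          have := (Finset.mem_Ico.mp hi).1
          exact_mod_cast (by omega : 0 < i)
        have heq : h i * Φ (x i) * w i =
            ((i : ℝ) ^ 2 + 1) ^ 2 / ((i : ℝ) ^ 2 * (2 * (i : ℝ) ^ 2 + 1)) := by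
          rw [hx, if_pos hi, hw, hh, hΦ _ (hexp i), Real.log_exp, ← Real.exp_mul,
            show 2 * β * (i : ℝ) ^ 2 = β * (i : ℝ) ^ 2 + β * (i : ℝ) ^ 2 by ring,
            Real.exp_add, mul_comm ((i : ℝ) ^ 2) β]
          have h1 := (Real.exp_pos (β * (i : ℝ) ^ 2)).ne'
          have h2 : 2 * (i : ℝ) ^ 2 + 1 ≠ 0 := by positivity
          field_simp
        rw [heq, div_le_div_iff₀ (by norm_num) (by positivity)]
        nlinarith [sq_nonneg (i : ℝ)]
      have hsum := Finset.card_nsmul_le_sum _ _ _ hterm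
      rw [Nat.card_Ico, Nat.add_sub_cancel, nsmul_eq_mul] at hsum
      rw [hρ₂, hsupp]
      linarith
  refine ⟨main, ?_⟩
  rintro ⟨C, hC, hbound⟩
  obtain ⟨x, hx1, hx2, hx3, hx4⟩ := main C hC
  exact absurd (hbound x hx1 hx2 hx3.le) (not_le.mpr hx4)
end
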